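/- arXiv:2405.05664 — 2 statements merged into one kernel-verified Lean document; each statement's English description precedes it below -/
import Mathlib

section
/- Let a<b be real numbers, q ∈ L¹([a,b]) with q ≥ 0 a.e. and q ≢ 0, and let g satisfy (g₊). Suppose that for every α ∈ dom B with B(α) = b one has ∂_α u(b;α) < 0. Then the Dirichlet problem u'' + q(t) g(u) = 0, u(a) = 0 = u(b), has at most one positive solution. -/
/-!
A solution of `u'' + F(t, u) = 0` with `F ≥ 0` is concave, so one that vanishes at both ends of
`[a, b]` is positive in between exactly when its initial slope is positive. Hence the positive
Dirichlet solutions are the `u(·;α)` with `α > 0` and `u(b;α) = 0`, and for each such `α` the first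
zero `B(α)` is `b`. The hypothesis therefore says that `α ↦ u(b;α)` has negative derivative at each
of its zeros in `(0, ∞)`. Between two consecutive zeros crossed downwards there would have to be an
upward crossing, so there is at most one zero.
-/

open Set MeasureTheory Filter Topology

/-- Carathéodory solution of `u'' + F(t, u) = 0` on `[a,b]`:
`u'` is the derivative of `u`, it is absolutely continuous (being an indefinite
integral of the integrable function `-F(·, u(·))`), and the equation holds a.e. -/
def IsCaraSol (a b : ℝ) (F : ℝ → ℝ → ℝ) (u u' : ℝ → ℝ) : Prop :=
  (∀ t ∈ Set.Icc a b, HasDerivAt u (u' t) t) ∧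
  IntervalIntegrable (fun s => F s (u s)) MeasureTheory.volume a b ∧
  ∀ t ∈ Set.Icc a b, u' t = u' a - ∫ s in a..t, F s (u s)

/-- The domain of the first-zero map `B` of the shooting method. -/
def domB (a b : ℝ) (U : ℝ → ℝ → ℝ) : Set ℝ :=
  {α : ℝ | 0 < α ∧ ∃ t ∈ Set.Ioc a b, U α t = 0}

/-- The first zero `B(α)` in `(a,b]` of the solution `u(·;α)`. -/
noncomputable def firstZero (a b : ℝ) (U : ℝ → ℝ → ℝ) (α : ℝ) : ℝ :=
  sInf {t | t ∈ Set.Ioc a b ∧ U α t = 0}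

theorem subsingleton_inter_preimage_of_hasDerivWithinAt_neg {s : Set ℝ} (hs : s.OrdConnected)
    {f f' : ℝ → ℝ} {c : ℝ} (hf : ∀ x ∈ s, HasDerivWithinAt f (f' x) s x)
    (hneg : ∀ x ∈ s, f x = c → f' x < 0) : (s ∩ f ⁻¹' {c}).Subsingleton := by
  suffices ∀ x ∈ s ∩ f ⁻¹' {c}, ∀ y ∈ s ∩ f ⁻¹' {c}, ¬ x < y from
    fun x hx y hy => le_antisymm (not_lt.1 (this y hy x hx)) (not_lt.1 (this x hx y hy))
  rintro x ⟨hxs, hfx⟩ y ⟨hys, hfy⟩ hxy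
  have hsub : Icc x y ⊆ s := hs.out hxs hys
  have hderiv : ∀ t ∈ Icc x y, HasDerivWithinAt f (f' t) (Icc x y) t :=
    fun t ht => (hf t (hsub ht)).mono hsub
  have hle : ∀ t ∈ Icc x y, f t ≤ c :=
    image_le_of_deriv_right_lt_deriv_boundary (B' := fun _ => 0)
      (fun t ht => (hderiv t ht).continuousWithinAt)
      (fun t ht => (hderiv t (Ico_subset_Icc_self ht)).mono_of_mem_nhdsWithin
        (Icc_mem_nhdsGE_of_mem ht))
      hfx.le (fun t => hasDerivAt_const t c)
      (fun t ht => hneg t (hsub (Ico_subset_Icc_self ht)))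
  have hleft : HasDerivWithinAt f (f' y) (Iio y) y :=
    (hderiv y (right_mem_Icc.2 hxy.le)).mono_of_mem_nhdsWithin (Icc_mem_nhdsLT hxy)
  have hslope : ∀ᶠ t in 𝓝[<] y, slope f y t < 0 :=
    ((hasDerivWithinAt_iff_tendsto_slope' self_notMem_Iio).1 hleft).eventually_lt_const
      (hneg y hys hfy)
  obtain ⟨t, ht, htxy⟩ := (hslope.and (Ioo_mem_nhdsLT hxy)).exists
  rw [slope_comm, slope_neg_iff_of_le htxy.2.le, hfy] at ht
  exact ht.not_ge (hle t (Ioo_subset_Icc_self htxy))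

theorem left_lt_of_concaveOn_of_hasDerivWithinAt_pos {a b t d : ℝ} {f : ℝ → ℝ}
    (hf : ConcaveOn ℝ (Icc a b) f) (hderiv : HasDerivWithinAt f d (Ioi a) a) (hd : 0 < d)
    (hab : f a ≤ f b) (ht : t ∈ Ioo a b) : f a < f t := by
  have hslope : ∀ᶠ s in 𝓝[>] a, 0 < slope f a s :=
    ((hasDerivWithinAt_iff_tendsto_slope' self_notMem_Ioi).1 hderiv).eventually_const_lt hd
  obtain ⟨s, hs, has, hst⟩ := (hslope.and (Ioo_mem_nhdsGT ht.1)).exists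
  rw [slope_pos_iff_of_le has.le] at hs
  by_contra! hta
  have hsb : s < b := hst.trans ht.2
  have hbt : f b < f t :=
    hf.lt_right_of_left_lt ⟨has.le, hsb.le⟩ (right_mem_Icc.2 (has.trans hsb).le)
      (by rw [openSegment_eq_Ioo hsb]; exact ⟨hst, ht.2⟩) (hta.trans_lt hs)
  exact (hab.trans_lt hbt).not_ge hta

section CaratheodorySolutions

variable {a b : ℝ} {F : ℝ → ℝ → ℝ} {u u' : ℝ → ℝ}

theorem IsCaraSol.antitoneOn_deriv (h : IsCaraSol a b F u u')
    (hF : ∀ᵐ t ∂volume.restrict (Icc a b), 0 ≤ F t (u t)) : AntitoneOn u' (Icc a b) := by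
  obtain ⟨-, hF_int, heq⟩ := h
  intro s hs t ht hst
  have hF_int_left {r : ℝ} (hr : r ∈ Icc a b) :
      IntervalIntegrable (fun x => F x (u x)) volume a r :=
    hF_int.mono_set (uIcc_subset_uIcc_left (Icc_subset_uIcc hr))
  have hdrop : u' s - u' t = ∫ x in s..t, F x (u x) := by
    rw [heq s hs, heq t ht,
      ← intervalIntegral.integral_interval_sub_left (hF_int_left ht) (hF_int_left hs)]
    ring
  have hnonneg : 0 ≤ ∫ x in s..t, F x (u x) :=
    intervalIntegral.integral_nonneg_of_ae_restrict hst
      (ae_restrict_of_ae_restrict_of_subset (Icc_subset_Icc hs.1 ht.2) hF)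
  linarith

theorem IsCaraSol.concaveOn (h : IsCaraSol a b F u u')
    (hF : ∀ᵐ t ∂volume.restrict (Icc a b), 0 ≤ F t (u t)) : ConcaveOn ℝ (Icc a b) u := by
  have hderiv : ∀ t ∈ interior (Icc a b), HasDerivAt u (u' t) t :=
    fun t ht => h.1 t (interior_subset ht)
  refine AntitoneOn.concaveOn_of_deriv (convex_Icc a b)
    (fun t ht => (h.1 t ht).continuousAt.continuousWithinAt)
    (fun t ht => (hderiv t ht).differentiableAt.differentiableWithinAt) ?_
  exact ((h.antitoneOn_deriv hF).mono interior_subset).congr fun t ht => (hderiv t ht).deriv.symm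

/-- A positive solution of the Dirichlet problem `u'' + F(t, u) = 0`, `u(a) = 0 = u(b)`, together
with its derivative `u'`. -/
structure IsPosDirichletSol (a b : ℝ) (F : ℝ → ℝ → ℝ) (u u' : ℝ → ℝ) : Prop where
  isCaraSol : IsCaraSol a b F u u'
  left_eq_zero : u a = 0
  right_eq_zero : u b = 0
  pos : ∀ t ∈ Ioo a b, 0 < u t

theorem IsPosDirichletSol.deriv_left_pos (h : IsPosDirichletSol a b F u u') (hab : a < b)
    (hF : ∀ᵐ t ∂volume.restrict (Icc a b), 0 ≤ F t (u t)) : 0 < u' a := by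
  obtain ⟨t, ht⟩ := nonempty_Ioo.2 hab
  have ha : a ∈ Icc a b := left_mem_Icc.2 hab.le
  calc
    0 < slope u a t := (slope_pos_iff_of_le ht.1.le).2 (h.left_eq_zero.trans_lt (h.pos t ht))
    _ ≤ u' a := (h.isCaraSol.concaveOn hF).slope_le_of_hasDerivAt ha (Ioo_subset_Icc_self ht)
      ht.1 (h.isCaraSol.1 a ha)

theorem IsCaraSol.isPosDirichletSol (h : IsCaraSol a b F u u') (hab : a < b)
    (hF : ∀ᵐ t ∂volume.restrict (Icc a b), 0 ≤ F t (u t)) (ha : u a = 0) (hb : u b = 0)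
    (hslope : 0 < u' a) : IsPosDirichletSol a b F u u' where
  isCaraSol := h
  left_eq_zero := ha
  right_eq_zero := hb
  pos _ ht := ha ▸ left_lt_of_concaveOn_of_hasDerivWithinAt_pos (h.concaveOn hF)
    (h.1 a (left_mem_Icc.2 hab.le)).hasDerivWithinAt hslope (ha.trans hb.symm).le ht

end CaratheodorySolutions

theorem firstZero_eq_right {a b α : ℝ} {U : ℝ → ℝ → ℝ} (hab : a < b) (hb : U α b = 0)
    (hne : ∀ t ∈ Ioo a b, U α t ≠ 0) : firstZero a b U α = b :=
  IsLeast.csInf_eq ⟨⟨right_mem_Ioc.2 hab, hb⟩,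
    fun t ⟨ht, hzero⟩ => not_lt.1 fun htb => hne t ⟨ht.1, htb⟩ hzero⟩

theorem at_most_one_positive_solution_of_shooting_general {a b : ℝ} (hab : a < b)
    {F : ℝ → ℝ → ℝ} (hF : ∀ᵐ t ∂volume.restrict (Icc a b), ∀ x, 0 ≤ F t x)
    {U U' : ℝ → ℝ → ℝ} {D : ℝ → ℝ}
    (hU_sol : ∀ α > 0, IsCaraSol a b F (U α) (U' α))
    (hU_init : ∀ α > 0, U α a = 0 ∧ U' α a = α)
    (hU_uniq : ∀ α > 0, ∀ v v' : ℝ → ℝ, IsCaraSol a b F v v' → v a = 0 → v' a = α →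
      EqOn v (U α) (Icc a b))
    (hD : ∀ α > 0, HasDerivAt (fun β => U β b) (D α) α)
    (hshoot : ∀ α ∈ domB a b U, firstZero a b U α = b → D α < 0)
    {u u₁ v v₁ : ℝ → ℝ} (hu : IsPosDirichletSol a b F u u₁)
    (hv : IsPosDirichletSol a b F v v₁) : EqOn u v (Icc a b) := by
  have hF_along (w : ℝ → ℝ) : ∀ᵐ t ∂volume.restrict (Icc a b), 0 ≤ F t (w t) :=
    hF.mono fun t ht => ht (w t)
  have hneg : ∀ α > 0, U α b = 0 → D α < 0 := by
    intro α hα hzero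
    obtain ⟨hinit, hslope⟩ := hU_init α hα
    have hpos := ((hU_sol α hα).isPosDirichletSol hab (hF_along _) hinit hzero
      (hslope.symm ▸ hα)).pos
    exact hshoot α ⟨hα, b, right_mem_Ioc.2 hab, hzero⟩
      (firstZero_eq_right hab hzero fun t ht => (hpos t ht).ne')
  have hsub : (Ioi 0 ∩ (fun α => U α b) ⁻¹' {0}).Subsingleton :=
    subsingleton_inter_preimage_of_hasDerivWithinAt_neg ordConnected_Ioi
      (fun α hα => (hD α hα).hasDerivWithinAt) hneg
  have hmem {w w₁ : ℝ → ℝ} (hw : IsPosDirichletSol a b F w w₁) :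
      w₁ a ∈ Ioi 0 ∩ (fun α => U α b) ⁻¹' {0} ∧ EqOn w (U (w₁ a)) (Icc a b) := by
    have hslope := hw.deriv_left_pos hab (hF_along w)
    have heq := hU_uniq (w₁ a) hslope w w₁ hw.isCaraSol hw.left_eq_zero rfl
    exact ⟨⟨hslope, (heq (right_mem_Icc.2 hab.le)).symm.trans hw.right_eq_zero⟩, heq⟩
  obtain ⟨hu_mem, hu_eq⟩ := hmem hu
  obtain ⟨hv_mem, hv_eq⟩ := hmem hv
  rw [hsub hu_mem hv_mem] at hu_eq
  exact hu_eq.trans hv_eq.symm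

/-- If `∂_α u(b;α) < 0` whenever `B(α) = b`, then the Dirichlet
problem `u'' + q(t) g(u) = 0`, `u(a) = 0 = u(b)` has at most one positive solution. -/
theorem at_most_one_positive_solution_of_shooting
    (a b : ℝ) (hab : a < b)
    (q : ℝ → ℝ)
    (hq_int : IntegrableOn q (Set.Icc a b))
    (hq_nonneg : ∀ᵐ t ∂(volume.restrict (Set.Icc a b)), 0 ≤ q t)
    (hq_ne : ¬ (∀ᵐ t ∂(volume.restrict (Set.Icc a b)), q t = 0))
    (g : ℝ → ℝ)
    (hg_C1 : ContDiffOn ℝ 1 g (Set.Ici 0))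
    (hg0 : g 0 = 0)
    (hg_pos : ∀ s > 0, 0 < g s)
    (hg_ext : ∀ s ≤ (0 : ℝ), g s = 0)
    -- the shooting family `U α = u(·;α)`, with time-derivative `U' α` and
    -- derivative `DU α t = ∂_α u(t;α)` with respect to the initial slope:
    (U U' DU : ℝ → ℝ → ℝ)
    (hU_sol : ∀ α ≥ (0 : ℝ), IsCaraSol a b (fun s x => q s * g x) (U α) (U' α))
    (hU_init : ∀ α ≥ (0 : ℝ), U α a = 0 ∧ U' α a = α)
    (hU_uniq : ∀ α ≥ (0 : ℝ), ∀ v v' : ℝ → ℝ,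
        IsCaraSol a b (fun s x => q s * g x) v v' → v a = 0 → v' a = α →
        ∀ t ∈ Set.Icc a b, v t = U α t)
    (hDU : ∀ α > (0 : ℝ), ∀ t ∈ Set.Icc a b, HasDerivAt (fun β => U β t) (DU α t) α)
    -- the shooting hypothesis: `B(α) = b → ∂_α u(b;α) < 0` on `dom B`:
    (hshoot : ∀ α ∈ domB a b U, firstZero a b U α = b → DU α b < 0) :
    ∀ u u₁ v v₁ : ℝ → ℝ,
      IsCaraSol a b (fun s x => q s * g x) u u₁ → u a = 0 → u b = 0 →
        (∀ t ∈ Set.Ioo a b, 0 < u t) →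
      IsCaraSol a b (fun s x => q s * g x) v v₁ → v a = 0 → v b = 0 →
        (∀ t ∈ Set.Ioo a b, 0 < v t) →
      Set.EqOn u v (Set.Icc a b) := by
  intro u u₁ v v₁ hu hua hub hu_pos hv hva hvb hv_pos
  have hg_nonneg (x : ℝ) : 0 ≤ g x :=
    (le_or_gt x 0).elim (fun hx => (hg_ext x hx).ge) fun hx => (hg_pos x hx).le
  have hF : ∀ᵐ t ∂volume.restrict (Icc a b), ∀ x, 0 ≤ q t * g x :=
    hq_nonneg.mono fun t ht x => mul_nonneg ht (hg_nonneg x)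
  exact at_most_one_positive_solution_of_shooting_general hab hF
    (fun α hα => hU_sol α hα.le) (fun α hα => hU_init α hα.le) (fun α hα => hU_uniq α hα.le)
    (fun α hα => hDU α hα b (right_mem_Icc.2 hab.le)) hshoot
    ⟨hu, hua, hub, hu_pos⟩ ⟨hv, hva, hvb, hv_pos⟩
end

section
/- Let a<b be real numbers, q ∈ L¹([a,b]) with q ≥ 0 a.e. and q ≢ 0, and let g satisfy (g₊) and (g_s). Then for every α > 0 with α ∈ dom B, the function t ↦ ∂_α u(t;α) has at least one zero in the open interval (a, B(α)). -/
open Set MeasureTheory Filter Topology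

/-!
Two solutions `u(·;α)` and `u(·;β)` satisfy a Wronskian identity in which `∫ u(·;α) q g(u(·;β))`
appears. Differentiating it in `β` at `β = α` and evaluating at `B = B(α)`, where `u` vanishes,
gives
  `∫_a^B q (u g'(u) - g(u)) ∂_α u = u'(B) ∂_α u(B)`.
On `(a, B)` we have `u > 0`, so condition (g_s) makes `u g'(u) - g(u)` positive, while `u'(B) ≤ 0`.
If `∂_α u` had no zero in `(a, B)`, the two sides would have opposite signs, forcing `q = 0` a.e. on
`(a, B)`; but then `u` would be affine there and could not return to `0`.

Since `q` is only integrable, differentiation under the integral sign is justified by a Lipschitz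
bound for `β ↦ (u(t;β), u'(t;β))`, uniform in `t`, which comes from an `L¹` form of Grönwall's
inequality. The same bound makes `∂_α u` continuous in `t`.
-/

open scoped NNReal

section AbsolutelyContinuous

variable {a b : ℝ}

theorem absolutelyContinuousOnInterval_congr {X : Type*} [PseudoMetricSpace X] {f g : ℝ → X}
    (hf : AbsolutelyContinuousOnInterval f a b)
    (hfg : EqOn f g (uIcc a b)) : AbsolutelyContinuousOnInterval g a b := by
  rw [absolutelyContinuousOnInterval_iff] at hf ⊢
  intro ε hε
  obtain ⟨δ, hδ, hfδ⟩ := hf ε hε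
  refine ⟨δ, hδ, fun E hE hEδ => ?_⟩
  have hsum : ∑ i ∈ Finset.range E.1, dist (f (E.2 i).1) (f (E.2 i).2) =
      ∑ i ∈ Finset.range E.1, dist (g (E.2 i).1) (g (E.2 i).2) :=
    Finset.sum_congr rfl fun i hi => by rw [hfg (hE.1 i hi).1, hfg (hE.1 i hi).2]
  exact hsum ▸ hfδ E hE hEδ

theorem absolutelyContinuousOnInterval_of_hasDerivAt {E : Type*} [NormedAddCommGroup E]
    [NormedSpace ℝ E] {f f' : ℝ → E}
    (hf : ∀ x ∈ uIcc a b, HasDerivAt f (f' x) x) (hf' : ContinuousOn f' (uIcc a b)) :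
    AbsolutelyContinuousOnInterval f a b := by
  obtain ⟨C, hC⟩ := isCompact_uIcc.exists_bound_of_continuousOn hf'
  refine LipschitzOnWith.absolutelyContinuousOnInterval (K := C.toNNReal) ?_
  refine (convex_uIcc a b).lipschitzOnWith_of_nnnorm_hasDerivWithin_le
    (fun x hx => (hf x hx).hasDerivWithinAt) fun x hx => ?_
  exact NNReal.coe_le_coe.1 ((hC x hx).trans (Real.le_coe_toNNReal C))

theorem integral_eq_sub_of_ae_hasDerivAt {f f' : ℝ → ℝ} (hf : AbsolutelyContinuousOnInterval f a b)
    (hf' : ∀ᵐ x, x ∈ uIoc a b → HasDerivAt f (f' x) x) : ∫ x in a..b, f' x = f b - f a := by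
  rw [← hf.integral_deriv_eq_sub]
  refine intervalIntegral.integral_congr_ae ?_
  filter_upwards [hf'] with x hx hxab using (hx hxab).deriv.symm

end AbsolutelyContinuous

section Gronwall

variable {a b δ : ℝ} {k y : ℝ → ℝ}

theorem monotoneOn_exp_integral (hk : IntervalIntegrable k volume a b)
    (hk0 : ∀ᵐ s ∂volume.restrict (Icc a b), 0 ≤ k s) :
    MonotoneOn (fun t => Real.exp (∫ s in a..t, k s)) (Icc a b) := by
  intro s hs t ht hst
  refine Real.exp_le_exp.2 (intervalIntegral.integral_mono_interval le_rfl hs.1 hst ?_ ?_)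
  · exact ae_restrict_of_ae_restrict_of_subset
      (Ioc_subset_Icc_self.trans (Icc_subset_Icc_right ht.2)) hk0
  · exact hk.mono_set (uIcc_subset_uIcc left_mem_uIcc (Icc_subset_uIcc ht))

theorem integral_mul_exp_integral_le (hab : a ≤ b) (hk : IntervalIntegrable k volume a b)
    (hk0 : ∀ᵐ s ∂volume.restrict (Icc a b), 0 ≤ k s) :
    ∫ t in a..b, k t * Real.exp (∫ s in a..t, k s) ≤ Real.exp (∫ s in a..b, k s) - 1 := by
  set φ : ℝ → ℝ := fun t => Real.exp (∫ s in a..t, k s) with hφ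
  have hmono : MonotoneOn φ (uIcc a b) := uIcc_of_le hab ▸ monotoneOn_exp_integral hk hk0
  -- Monotonicity of `φ` already bounds `∫ φ'`, without any absolute continuity.
  have hderiv : ∫ t in a..b, k t * φ t = ∫ t in a..b, deriv φ t := by
    refine intervalIntegral.integral_congr_ae ?_
    filter_upwards [hk.ae_hasDerivAt_integral] with t ht htab
    rw [(ht (uIoc_subset_uIcc htab) a left_mem_uIcc).exp.deriv, mul_comm]
  have hφa : φ a = 1 := by simp [hφ]
  have hφab : φ a ≤ φ b := hmono left_mem_uIcc right_mem_uIcc hab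
  have hmem := hmono.intervalIntegral_deriv_mem_uIcc
  rw [uIcc_of_le (sub_nonneg.2 hφab)] at hmem
  calc ∫ t in a..b, k t * φ t = ∫ t in a..b, deriv φ t := hderiv
    _ ≤ φ b - φ a := hmem.2
    _ = φ b - 1 := by rw [hφa]

theorem le_mul_exp_integral_of_le_add_integral (hδ : 0 ≤ δ) (hk : IntervalIntegrable k volume a b)
    (hk0 : ∀ᵐ s ∂volume.restrict (Icc a b), 0 ≤ k s) (hy : ContinuousOn y (Icc a b))
    (hle : ∀ t ∈ Icc a b, y t ≤ δ + ∫ s in a..t, k s * y s) :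
    ∀ t ∈ Icc a b, y t ≤ δ * Real.exp (∫ s in a..t, k s) := by
  rcases lt_or_ge b a with hba | hab
  · simp [Icc_eq_empty_of_lt hba]
  set φ : ℝ → ℝ := fun t => Real.exp (∫ s in a..t, k s)
  have hφ_pos (t : ℝ) : 0 < φ t := Real.exp_pos _
  have hφ_cont : ContinuousOn φ (Icc a b) := uIcc_of_le hab ▸
    (hk.absolutelyContinuousOnInterval_intervalIntegral left_mem_uIcc).continuousOn.rexp
  obtain ⟨m, hm, hmax⟩ := isCompact_Icc.exists_isMaxOn (nonempty_Icc.2 hab)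
    (hy.div hφ_cont fun t _ => (hφ_pos t).ne')
  -- At a maximiser `m` of `y / φ` the hypothesis gives `M * φ m ≤ δ + M * (φ m - 1)`.
  set M := y m / φ m
  have hyM : ∀ t ∈ Icc a b, y t ≤ M * φ t := fun t ht => (div_le_iff₀ (hφ_pos t)).1 (hmax ht)
  suffices hMδ : M ≤ δ from fun t ht =>
    (hyM t ht).trans (mul_le_mul_of_nonneg_right hMδ (hφ_pos t).le)
  by_contra! hδM
  have hsub : Icc a m ⊆ Icc a b := Icc_subset_Icc_right hm.2
  have hsub' : uIcc a m ⊆ uIcc a b := uIcc_subset_uIcc left_mem_uIcc (Icc_subset_uIcc hm)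
  have hk0m := ae_restrict_of_ae_restrict_of_subset hsub hk0
  have hkm := hk.mono_set hsub'
  have hIcc : uIcc a m = Icc a m := uIcc_of_le hm.1
  have hint : ∫ s in a..m, k s * y s ≤ ∫ s in a..m, M * (k s * φ s) := by
    refine intervalIntegral.integral_mono_ae_restrict hm.1
      (hkm.mul_continuousOn (hIcc ▸ hy.mono hsub))
      ((hkm.mul_continuousOn (hIcc ▸ hφ_cont.mono hsub)).const_mul M) ?_
    filter_upwards [hk0m, ae_restrict_mem measurableSet_Icc] with s hks hs
    calc k s * y s ≤ k s * (M * φ s) := mul_le_mul_of_nonneg_left (hyM s (hsub hs)) hks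
      _ = M * (k s * φ s) := by ring
  have hMφ : M * φ m ≤ δ + M * (φ m - 1) := calc
    M * φ m = y m := div_mul_cancel₀ _ (hφ_pos m).ne'
    _ ≤ δ + ∫ s in a..m, M * (k s * φ s) := (hle m hm).trans (by gcongr)
    _ ≤ δ + M * (φ m - 1) := by
      rw [intervalIntegral.integral_const_mul]
      gcongr
      · exact hδ.trans hδM.le
      · exact integral_mul_exp_integral_le hm.1 hkm hk0m
  linarith

end Gronwall

namespace IsCaraSol

variable {a b : ℝ} {F G : ℝ → ℝ → ℝ} {u u' v v' : ℝ → ℝ}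

theorem mono_right (hu : IsCaraSol a b F u u') {c : ℝ} (hc : c ∈ Icc a b) :
    IsCaraSol a c F u u' := by
  have hsub : Icc a c ⊆ Icc a b := Icc_subset_Icc_right hc.2
  exact ⟨fun t ht => hu.1 t (hsub ht),
    hu.2.1.mono_set (uIcc_subset_uIcc left_mem_uIcc (Icc_subset_uIcc hc)),
    fun t ht => hu.2.2 t (hsub ht)⟩

theorem continuousOn (hu : IsCaraSol a b F u u') : ContinuousOn u (Icc a b) :=
  fun t ht => (hu.1 t ht).continuousAt.continuousWithinAt

theorem deriv_sub_deriv_eq (hu : IsCaraSol a b F u u') {t : ℝ} (ht : t ∈ Icc a b) :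
    u' t - u' a = -∫ s in a..t, F s (u s) := by
  rw [hu.2.2 t ht]
  ring

theorem absolutelyContinuous_deriv (hab : a ≤ b) (hu : IsCaraSol a b F u u') :
    AbsolutelyContinuousOnInterval u' a b := by
  have hconst : AbsolutelyContinuousOnInterval (fun _ => u' a) a b :=
    (LipschitzWith.const (u' a)).lipschitzOnWith.absolutelyContinuousOnInterval
  refine absolutelyContinuousOnInterval_congr
    (hconst.fun_sub (hu.2.1.absolutelyContinuousOnInterval_intervalIntegral left_mem_uIcc)) ?_
  exact fun t ht => (hu.2.2 t (uIcc_of_le hab ▸ ht)).symm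

theorem continuousOn_deriv (hab : a ≤ b) (hu : IsCaraSol a b F u u') :
    ContinuousOn u' (Icc a b) :=
  uIcc_of_le hab ▸ (hu.absolutelyContinuous_deriv hab).continuousOn

theorem absolutelyContinuous (hab : a ≤ b) (hu : IsCaraSol a b F u u') :
    AbsolutelyContinuousOnInterval u a b :=
  absolutelyContinuousOnInterval_of_hasDerivAt (fun t ht => hu.1 t (uIcc_of_le hab ▸ ht))
    (uIcc_of_le hab ▸ hu.continuousOn_deriv hab)

theorem ae_hasDerivAt_deriv (hab : a ≤ b) (hu : IsCaraSol a b F u u') :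
    ∀ᵐ t, t ∈ uIoc a b → HasDerivAt u' (-F t (u t)) t := by
  rw [uIoc_of_le hab]
  filter_upwards [hu.2.1.ae_hasDerivAt_integral, (Ioo_ae_eq_Ioc (a := a) (b := b)).mem_iff]
    with t ht htab htIoc
  have htIoo : t ∈ Ioo a b := htab.2 htIoc
  have hd := (ht (Icc_subset_uIcc (Ioo_subset_Icc_self htIoo)) a left_mem_uIcc).const_sub (u' a)
  refine hd.congr_of_eventuallyEq ?_
  filter_upwards [Icc_mem_nhds htIoo.1 htIoo.2] with s hs using hu.2.2 s hs

theorem integral_wronskian (hab : a ≤ b) (hu : IsCaraSol a b F u u') (hv : IsCaraSol a b G v v') :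
    ∫ s in a..b, (u s * G s (v s) - F s (u s) * v s) =
      (u' b * v b - u b * v' b) - (u' a * v a - u a * v' a) := by
  refine integral_eq_sub_of_ae_hasDerivAt (f := fun t => u' t * v t - u t * v' t)
    (((hu.absolutelyContinuous_deriv hab).fun_mul (hv.absolutelyContinuous hab)).fun_sub
      ((hu.absolutelyContinuous hab).fun_mul (hv.absolutelyContinuous_deriv hab))) ?_
  filter_upwards [hu.ae_hasDerivAt_deriv hab, hv.ae_hasDerivAt_deriv hab] with t hu't hv't ht
  have htIcc : t ∈ Icc a b := uIcc_of_le hab ▸ uIoc_subset_uIcc ht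
  have hd := ((hu't ht).fun_mul (hv.1 t htIcc)).fun_sub ((hu.1 t htIcc).fun_mul (hv't ht))
  exact hd.congr_deriv (by ring)

theorem intervalIntegrable_wronskian (hab : a ≤ b) (hu : IsCaraSol a b F u u')
    (hv : IsCaraSol a b G v v') :
    IntervalIntegrable (fun s => u s * G s (v s) - F s (u s) * v s) volume a b :=
  (hv.2.1.continuousOn_mul (uIcc_of_le hab ▸ hu.continuousOn)).sub
    (hu.2.1.mul_continuousOn (uIcc_of_le hab ▸ hv.continuousOn))

theorem abs_sub_le_add_integral (hu : IsCaraSol a b F u u') (hv : IsCaraSol a b F v v') {t : ℝ}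
    (ht : t ∈ Icc a b) : |u t - v t| ≤ |u a - v a| + ∫ s in a..t, |u' s - v' s| := by
  have hut := hu.mono_right ht
  have hvt := hv.mono_right ht
  have hcont : ContinuousOn (fun s => u' s - v' s) (uIcc a t) := uIcc_of_le ht.1 ▸
    (hut.continuousOn_deriv ht.1).sub (hvt.continuousOn_deriv ht.1)
  have hftc : ∫ s in a..t, (u' s - v' s) = (u t - v t) - (u a - v a) :=
    intervalIntegral.integral_eq_sub_of_hasDerivAt
      (fun s hs => (hut.1 s (uIcc_of_le ht.1 ▸ hs)).sub (hvt.1 s (uIcc_of_le ht.1 ▸ hs)))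
      hcont.intervalIntegrable
  calc |u t - v t| = |(u a - v a) + ∫ s in a..t, (u' s - v' s)| := by rw [hftc]; congr 1; ring
    _ ≤ |u a - v a| + |∫ s in a..t, (u' s - v' s)| := abs_add_le _ _
    _ ≤ _ := by gcongr; exact intervalIntegral.abs_integral_le_integral_abs ht.1

theorem abs_deriv_sub_le_add_integral (hu : IsCaraSol a b F u u') (hv : IsCaraSol a b F v v')
    {t : ℝ} (ht : t ∈ Icc a b) :
    |u' t - v' t| ≤ |u' a - v' a| + ∫ s in a..t, |F s (u s) - F s (v s)| := by
  have hut := hu.mono_right ht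
  have hvt := hv.mono_right ht
  calc |u' t - v' t| = |(u' a - v' a) - ∫ s in a..t, (F s (u s) - F s (v s))| := by
        rw [intervalIntegral.integral_sub hut.2.1 hvt.2.1, hu.2.2 t ht, hv.2.2 t ht]
        congr 1
        ring
    _ ≤ |u' a - v' a| + |∫ s in a..t, (F s (u s) - F s (v s))| := abs_sub _ _
    _ ≤ _ := by gcongr; exact intervalIntegral.abs_integral_le_integral_abs ht.1

theorem abs_sub_add_abs_deriv_sub_le {k : ℝ → ℝ} (hu : IsCaraSol a b F u u')
    (hv : IsCaraSol a b F v v') (hk : IntervalIntegrable k volume a b)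
    (hk0 : ∀ᵐ s ∂volume.restrict (Icc a b), 0 ≤ k s)
    (hF : ∀ᵐ s ∂volume.restrict (Icc a b), |F s (u s) - F s (v s)| ≤ k s * |u s - v s|) :
    ∀ t ∈ Icc a b, |u t - v t| + |u' t - v' t| ≤
      (|u a - v a| + |u' a - v' a|) * Real.exp (∫ s in a..t, (1 + k s)) := by
  intro t₀ ht₀
  have hab : a ≤ b := ht₀.1.trans ht₀.2
  have hcont : ContinuousOn (fun s => |u' s - v' s|) (Icc a b) :=
    ((hu.continuousOn_deriv hab).sub (hv.continuousOn_deriv hab)).abs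
  have hcont' : ContinuousOn (fun s => |u s - v s| + |u' s - v' s|) (Icc a b) :=
    (hu.continuousOn.sub hv.continuousOn).abs.add hcont
  have hk1 : IntervalIntegrable (fun s => 1 + k s) volume a b := intervalIntegrable_const.add hk
  refine le_mul_exp_integral_of_le_add_integral (by positivity) hk1
    (hk0.mono fun s hs => by positivity) hcont' (fun t ht => ?_) t₀ ht₀
  have hsub : Icc a t ⊆ Icc a b := Icc_subset_Icc_right ht.2
  have hIcc : uIcc a t = Icc a t := uIcc_of_le ht.1
  have hu'_int : IntervalIntegrable (fun s => |u' s - v' s|) volume a t :=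
    (hIcc ▸ hcont.mono hsub).intervalIntegrable
  have hF_int : IntervalIntegrable (fun s => |F s (u s) - F s (v s)|) volume a t :=
    ((hu.mono_right ht).2.1.sub (hv.mono_right ht).2.1).abs
  have hk_int : IntervalIntegrable (fun s => (1 + k s) * (|u s - v s| + |u' s - v' s|))
      volume a t :=
    (hk1.mono_set (uIcc_subset_uIcc left_mem_uIcc (Icc_subset_uIcc ht))).mul_continuousOn
      (hIcc ▸ hcont'.mono hsub)
  have hint : (∫ s in a..t, |u' s - v' s|) + ∫ s in a..t, |F s (u s) - F s (v s)| ≤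
      ∫ s in a..t, (1 + k s) * (|u s - v s| + |u' s - v' s|) := by
    rw [← intervalIntegral.integral_add hu'_int hF_int]
    refine intervalIntegral.integral_mono_ae_restrict ht.1 (hu'_int.add hF_int) hk_int ?_
    filter_upwards [ae_restrict_of_ae_restrict_of_subset hsub hk0,
      ae_restrict_of_ae_restrict_of_subset hsub hF] with s hks hFs
    nlinarith [abs_nonneg (u s - v s), mul_nonneg hks (abs_nonneg (u' s - v' s))]
  linarith [hu.abs_sub_le_add_integral hv ht, hu.abs_deriv_sub_le_add_integral hv ht]

theorem le_tangent_left (hu : IsCaraSol a b F u u')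
    (hF : ∀ᵐ s ∂volume.restrict (Icc a b), 0 ≤ F s (u s)) :
    ∀ t ∈ Icc a b, u t ≤ u a + u' a * (t - a) := by
  intro t ht
  have hderiv : ∀ s ∈ interior (Icc a b), deriv u s ≤ u' a := fun s hs => by
    have hs' := interior_subset hs
    have hint : 0 ≤ ∫ r in a..s, F r (u r) :=
      intervalIntegral.integral_nonneg_of_ae_restrict hs'.1
        (ae_restrict_of_ae_restrict_of_subset (Icc_subset_Icc_right hs'.2) hF)
    linarith [(hu.1 s hs').deriv, hu.deriv_sub_deriv_eq hs']
  have hmvt := (convex_Icc a b).image_sub_le_mul_sub_of_deriv_le hu.continuousOn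
    (fun s hs => (hu.1 s (interior_subset hs)).differentiableAt.differentiableWithinAt) hderiv
    a (left_mem_Icc.2 (ht.1.trans ht.2)) t ht ht.1
  linarith

theorem not_ae_eq_zero_of_eq (hab : a < b) (hu : IsCaraSol a b F u u') (hua : u a = u b)
    (hu'a : u' a ≠ 0) : ¬ ∀ᵐ s ∂volume.restrict (Ioc a b), F s (u s) = 0 := by
  intro hF
  obtain ⟨c, hc, hu'c⟩ := exists_hasDerivAt_eq_zero hab hu.continuousOn hua
    fun t ht => hu.1 t (Ioo_subset_Icc_self ht)
  have hint : ∫ s in a..c, F s (u s) = 0 :=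
    intervalIntegral.integral_zero_ae <| by
      rw [uIoc_of_le hc.1.le, ← ae_restrict_iff' measurableSet_Ioc]
      exact ae_restrict_of_ae_restrict_of_subset (Ioc_subset_Ioc_right hc.2.le) hF
  have := hu.deriv_sub_deriv_eq (Ioo_subset_Icc_self hc)
  rw [hint, hu'c] at this
  exact hu'a (by linarith)

end IsCaraSol

/-- The family of solutions of `u'' + F(t, u) = 0` shot from `u(a) = 0`: `U β` is the one with
initial slope `β`, and `U' β` is its time derivative. Only slopes `β ≥ 0` are considered. -/
structure IsShootingFamily (a b : ℝ) (F : ℝ → ℝ → ℝ) (U U' : ℝ → ℝ → ℝ) : Prop where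
  isCaraSol : ∀ β ≥ 0, IsCaraSol a b F (U β) (U' β)
  apply_left : ∀ β ≥ 0, U β a = 0
  deriv_left : ∀ β ≥ 0, U' β a = β

namespace IsShootingFamily

variable {a b R : ℝ} {F U U' : ℝ → ℝ → ℝ} {k : ℝ → ℝ≥0}

theorem le_mul_sub (hU : IsShootingFamily a b F U U')
    (hF : ∀ᵐ s ∂volume.restrict (Icc a b), ∀ x, 0 ≤ F s x) :
    ∀ β ∈ Icc 0 R, ∀ t ∈ Icc a b, U β t ≤ R * (b - a) := by
  intro β hβ t ht
  have hle := (hU.isCaraSol β hβ.1).le_tangent_left (hF.mono fun s hs => hs _) t ht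
  rw [hU.apply_left β hβ.1, hU.deriv_left β hβ.1, zero_add] at hle
  exact hle.trans (mul_le_mul hβ.2 (by linarith [ht.2]) (by linarith [ht.1]) (hβ.1.trans hβ.2))

theorem exists_lipschitzOnWith (hU : IsShootingFamily a b F U U')
    (hF : ∀ᵐ s ∂volume.restrict (Icc a b), ∀ x, 0 ≤ F s x)
    (hk : IntervalIntegrable (fun s => (k s : ℝ)) volume a b)
    (hF_lip : ∀ᵐ s ∂volume.restrict (Icc a b), LipschitzOnWith (k s) (F s) (Iic (R * (b - a)))) :
    ∃ C : ℝ≥0, ∀ t ∈ Icc a b,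
      LipschitzOnWith C (fun β => U β t) (Icc 0 R) ∧
        LipschitzOnWith C (fun β => U' β t) (Icc 0 R) := by
  have hk1 : IntervalIntegrable (fun s => 1 + (k s : ℝ)) volume a b :=
    intervalIntegrable_const.add hk
  refine ⟨⟨Real.exp (∫ s in a..b, (1 + (k s : ℝ))), (Real.exp_pos _).le⟩, fun t ht => ?_⟩
  have hab : a ≤ b := ht.1.trans ht.2
  have hsum : ∀ β ∈ Icc 0 R, ∀ γ ∈ Icc 0 R, |U β t - U γ t| + |U' β t - U' γ t| ≤
      Real.exp (∫ s in a..b, (1 + (k s : ℝ))) * |β - γ| := by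
    intro β hβ γ hγ
    have hlip : ∀ᵐ s ∂volume.restrict (Icc a b),
        |F s (U β s) - F s (U γ s)| ≤ k s * |U β s - U γ s| := by
      filter_upwards [hF_lip, ae_restrict_mem measurableSet_Icc] with s hFs hs
      exact hFs.dist_le_mul _ (hU.le_mul_sub hF β hβ s hs) _ (hU.le_mul_sub hF γ hγ s hs)
    have hgron := (hU.isCaraSol β hβ.1).abs_sub_add_abs_deriv_sub_le (hU.isCaraSol γ hγ.1) hk
      (ae_of_all _ fun s => (k s).2) hlip t ht
    rw [hU.apply_left β hβ.1, hU.apply_left γ hγ.1, hU.deriv_left β hβ.1, hU.deriv_left γ hγ.1,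
      sub_self, abs_zero, zero_add, mul_comm] at hgron
    exact hgron.trans (mul_le_mul_of_nonneg_right (monotoneOn_exp_integral hk1
      (ae_of_all _ fun s => by positivity) ht (right_mem_Icc.2 hab) ht.2) (abs_nonneg _))
  refine ⟨.of_dist_le_mul fun β hβ γ hγ => ?_, .of_dist_le_mul fun β hβ γ hγ => ?_⟩
  · exact (le_add_of_nonneg_right (abs_nonneg _)).trans (hsum β hβ γ hγ)
  · exact (le_add_of_nonneg_left (abs_nonneg _)).trans (hsum β hβ γ hγ)

end IsShootingFamily

section Variation

variable {a b α : ℝ} {F U U' : ℝ → ℝ → ℝ} {v dF : ℝ → ℝ} {I s : Set ℝ} {C : ℝ≥0}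

theorem lipschitzOnWith_of_hasDerivAt_parameter {E : Type*} [NormedAddCommGroup E]
    [NormedSpace ℝ E] {U U' : ℝ → ℝ → E} {v : ℝ → E} (hI : I ∈ 𝓝 α) (hs : Convex ℝ s)
    (hU : ∀ β ∈ I, ∀ t ∈ s, HasDerivAt (U β) (U' β t) t)
    (hU' : ∀ t ∈ s, LipschitzOnWith C (fun β => U' β t) I)
    (hv : ∀ t ∈ s, HasDerivAt (fun β => U β t) (v t) α) : LipschitzOnWith C v s := by
  -- Each increment `U β - U α` is `C * |β - α|`-Lipschitz; divide by `β - α` and let `β → α`.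
  refine .of_dist_le_mul fun t ht r hr => ?_
  refine le_of_tendsto ((hv t ht).tendsto_slope.dist (hv r hr).tendsto_slope) ?_
  filter_upwards [mem_nhdsWithin_of_mem_nhds hI, self_mem_nhdsWithin] with β hβ hβα
  have hincr : LipschitzOnWith (C * ‖β - α‖₊) (fun t => U β t - U α t) s :=
    hs.lipschitzOnWith_of_nnnorm_hasDerivWithin_le
      (fun x hx => ((hU β hβ x hx).sub (hU α (mem_of_mem_nhds hI) x hx)).hasDerivWithinAt)
      fun x hx => (hU' x hx).norm_sub_le hβ (mem_of_mem_nhds hI)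
  have hβα_pos : 0 < |β - α| := abs_pos.2 (sub_ne_zero.2 hβα)
  calc dist (slope (fun β => U β t) α β) (slope (fun β => U β r) α β)
      = |β - α|⁻¹ * dist (U β t - U α t) (U β r - U α r) := by
        simp only [slope, vsub_eq_sub, dist_smul₀, norm_inv, Real.norm_eq_abs]
    _ ≤ |β - α|⁻¹ * (C * |β - α| * dist t r) := by gcongr; exact hincr.dist_le_mul t ht r hr
    _ = C * dist t r := by field_simp

theorem lipschitzOnWith_mul_sub_mul {X : Type*} [PseudoMetricSpace X] {S : Set X} {f h : X → ℝ}
    {K : ℝ≥0} (hf : LipschitzOnWith K f S) (hh : LipschitzOnWith C h S) (x y : ℝ) :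
    LipschitzOnWith (‖x‖₊ * K + C * ‖y‖₊) (fun β => x * f β - y * h β) S := by
  refine .of_dist_le_mul fun β hβ γ hγ => ?_
  have hf' := mul_le_mul_of_nonneg_left (hf.dist_le_mul β hβ γ hγ) (abs_nonneg x)
  have hh' := mul_le_mul_of_nonneg_left (hh.dist_le_mul β hβ γ hγ) (abs_nonneg y)
  rw [Real.dist_eq, ← abs_mul] at hf' hh'
  calc |x * f β - y * h β - (x * f γ - y * h γ)|
      = |x * (f β - f γ) - y * (h β - h γ)| := by congr 1; ring
    _ ≤ |x * (f β - f γ)| + |y * (h β - h γ)| := abs_sub _ _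
    _ ≤ |x| * (K * dist β γ) + |y| * (C * dist β γ) := add_le_add hf' hh'
    _ = (|x| * K + C * |y|) * dist β γ := by ring

theorem integral_linearized_wronskian {k : ℝ → ℝ≥0} (hab : a ≤ b) (hI : I ∈ 𝓝 α)
    (hU : ∀ β ∈ I, IsCaraSol a b F (U β) (U' β)) (hUa : ∀ β ∈ I, U β a = 0) (hUb : U α b = 0)
    (hv : ∀ t ∈ Icc a b, HasDerivAt (fun β => U β t) (v t) α) (hv_cont : ContinuousOn v (Icc a b))
    (hU_lip : ∀ t ∈ Icc a b, LipschitzOnWith C (fun β => U β t) I)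
    (hk : IntervalIntegrable (fun s => (k s : ℝ)) volume a b)
    (hF_lip : ∀ᵐ s ∂volume.restrict (Ioc a b), LipschitzOnWith (k s) (fun β => F s (U β s)) I)
    (hF_deriv : ∀ᵐ s ∂volume.restrict (Ioc a b), HasDerivAt (fun β => F s (U β s)) (dF s) α)
    (hdF : AEStronglyMeasurable dF (volume.restrict (Ioc a b))) :
    IntervalIntegrable (fun s => U α s * dF s - F s (U α s) * v s) volume a b ∧
      ∫ s in a..b, (U α s * dF s - F s (U α s) * v s) = U' α b * v b := by
  have hu : IsCaraSol a b F (U α) (U' α) := hU α (mem_of_mem_nhds hI)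
  rw [ae_restrict_iff' measurableSet_Ioc, ← uIoc_of_le hab] at hF_lip hF_deriv
  rw [← uIoc_of_le hab] at hdF
  have hIcc : uIoc a b ⊆ Icc a b := uIcc_of_le hab ▸ uIoc_subset_uIcc
  have hu_meas := (hu.continuousOn.mono hIcc).aestronglyMeasurable (μ := volume) measurableSet_uIoc
  have hv_meas := (hv_cont.mono hIcc).aestronglyMeasurable (μ := volume) measurableSet_uIoc
  have hbound : IntervalIntegrable (fun s => |U α s| * k s + C * |F s (U α s)|) volume a b :=
    (hk.continuousOn_mul (uIcc_of_le hab ▸ hu.continuousOn.abs)).add (hu.2.1.abs.const_mul C)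
  obtain ⟨hint, hderiv⟩ := intervalIntegral.hasDerivAt_integral_of_dominated_loc_of_lip
    (F := fun β s => U α s * F s (U β s) - F s (U α s) * U β s)
    (F' := fun s => U α s * dF s - F s (U α s) * v s) hI
    (eventually_of_mem hI fun β hβ =>
      (hu.intervalIntegrable_wronskian hab (hU β hβ)).def'.aestronglyMeasurable)
    (hu.intervalIntegrable_wronskian hab hu)
    ((hu_meas.mul hdF).sub (hu.2.1.def'.aestronglyMeasurable.mul hv_meas))
    (by
      filter_upwards [hF_lip] with s hFs hs
      have hnnabs : Real.nnabs (|U α s| * k s + C * |F s (U α s)|) =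
          ‖U α s‖₊ * k s + C * ‖F s (U α s)‖₊ :=
        NNReal.coe_injective (abs_of_nonneg (by positivity))
      exact hnnabs ▸ lipschitzOnWith_mul_sub_mul (hFs hs) (hU_lip s (hIcc hs)) _ _)
    hbound
    (by
      filter_upwards [hF_deriv] with s hFs hs
      exact ((hFs hs).const_mul _).fun_sub ((hv s (hIcc hs)).const_mul _))
  -- Near `α`, the Wronskian identity evaluates the integral just differentiated.
  refine ⟨hint, hderiv.unique ?_⟩
  refine ((hv b (right_mem_Icc.2 hab)).const_mul (U' α b)).congr_of_eventuallyEq ?_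
  filter_upwards [hI] with β hβ
  rw [hu.integral_wronskian hab (hU β hβ), hUa α (mem_of_mem_nhds hI), hUa β hβ, hUb]
  ring

end Variation

namespace IsShootingFamily

variable {a b c α R : ℝ} {F U U' : ℝ → ℝ → ℝ} {k : ℝ → ℝ≥0} {v dF : ℝ → ℝ}

theorem continuousOn_variation (hU : IsShootingFamily a b F U U')
    (hF : ∀ᵐ s ∂volume.restrict (Icc a b), ∀ x, 0 ≤ F s x)
    (hk : IntervalIntegrable (fun s => (k s : ℝ)) volume a b)
    (hF_lip : ∀ᵐ s ∂volume.restrict (Icc a b), LipschitzOnWith (k s) (F s) (Iic (R * (b - a))))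
    (hα : α ∈ Ioo 0 R) (hv : ∀ t ∈ Icc a b, HasDerivAt (fun β => U β t) (v t) α) :
    ContinuousOn v (Icc a b) := by
  obtain ⟨C, hC⟩ := hU.exists_lipschitzOnWith hF hk hF_lip
  exact (lipschitzOnWith_of_hasDerivAt_parameter (Icc_mem_nhds hα.1 hα.2) (convex_Icc a b)
    (fun β hβ => (hU.isCaraSol β hβ.1).1) (fun t ht => (hC t ht).2) hv).continuousOn

theorem integral_sub_mul_variation (hU : IsShootingFamily a b F U U')
    (hF : ∀ᵐ s ∂volume.restrict (Icc a b), ∀ x, 0 ≤ F s x)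
    (hk : IntervalIntegrable (fun s => (k s : ℝ)) volume a b)
    (hF_lip : ∀ᵐ s ∂volume.restrict (Icc a b), LipschitzOnWith (k s) (F s) (Iic (R * (b - a))))
    (hα : α ∈ Ioo 0 R) (hv : ∀ t ∈ Icc a b, HasDerivAt (fun β => U β t) (v t) α)
    (hc : c ∈ Icc a b) (hUc : U α c = 0)
    (hF_deriv : ∀ᵐ s ∂volume.restrict (Ioc a c), HasDerivAt (F s) (dF s) (U α s))
    (hdF : AEStronglyMeasurable dF (volume.restrict (Ioc a c))) :
    IntervalIntegrable (fun s => (U α s * dF s - F s (U α s)) * v s) volume a c ∧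
      ∫ s in a..c, (U α s * dF s - F s (U α s)) * v s = U' α c * v c := by
  obtain ⟨C, hC⟩ := hU.exists_lipschitzOnWith hF hk hF_lip
  have hsub : Icc a c ⊆ Icc a b := Icc_subset_Icc_right hc.2
  have hIoc : Ioc a c ⊆ Icc a b := Ioc_subset_Icc_self.trans hsub
  have hv_cont := (hU.continuousOn_variation hF hk hF_lip hα hv).mono hsub
  have hk_int : IntervalIntegrable (fun s => ((k s * C : ℝ≥0) : ℝ)) volume a c :=
    (hk.mono_set (uIcc_subset_uIcc left_mem_uIcc (Icc_subset_uIcc hc))).mul_const C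
  have hF_lip' : ∀ᵐ s ∂volume.restrict (Ioc a c),
      LipschitzOnWith (k s * C) (fun β => F s (U β s)) (Icc 0 R) := by
    filter_upwards [ae_restrict_of_ae_restrict_of_subset hIoc hF_lip,
      ae_restrict_mem measurableSet_Ioc] with s hFs hs
    exact hFs.comp (hC s (hIoc hs)).1 fun β hβ => hU.le_mul_sub hF β hβ s (hIoc hs)
  have hF_deriv' : ∀ᵐ s ∂volume.restrict (Ioc a c),
      HasDerivAt (fun β => F s (U β s)) (dF s * v s) α := by
    filter_upwards [hF_deriv, ae_restrict_mem measurableSet_Ioc] with s hFs hs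
    exact hFs.comp α (hv s (hIoc hs))
  have hrw : ∀ s, (U α s * dF s - F s (U α s)) * v s =
      U α s * (dF s * v s) - F s (U α s) * v s := fun s => by ring
  simp only [hrw]
  exact integral_linearized_wronskian hc.1 (Icc_mem_nhds hα.1 hα.2)
    (fun β hβ => (hU.isCaraSol β hβ.1).mono_right hc) (fun β hβ => hU.apply_left β hβ.1) hUc
    (fun t ht => hv t (hsub ht)) hv_cont (fun t ht => (hC t (hsub ht)).1) hk_int hF_lip'
    hF_deriv' (hdF.mul ((hv_cont.mono Ioc_subset_Icc_self).aestronglyMeasurable measurableSet_Ioc))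

end IsShootingFamily

section Sign

variable {a c L : ℝ} {f h q v : ℝ → ℝ}

theorem mul_pos_of_isPreconnected_of_ne_zero {X : Type*} [TopologicalSpace X] {s : Set X}
    {f : X → ℝ} (hs : IsPreconnected s) (hf : ContinuousOn f s) (hne : ∀ x ∈ s, f x ≠ 0) :
    ∀ x ∈ s, ∀ y ∈ s, 0 < f x * f y := by
  intro x hx y hy
  by_contra! hle
  obtain ⟨z, hz, hfz⟩ := hs.intermediate_value hy hx (continuousOn_const.mul hf)
    (show (0 : ℝ) ∈ Icc (f x * f y) (f x * f x) from ⟨hle, mul_self_nonneg _⟩)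
  exact (mul_ne_zero (hne x hx) (hne z hz)) hfz

theorem hasDerivAt_nonpos_of_nonneg_left {m : ℝ} (hac : a < c) (hf : HasDerivAt f m c)
    (hfc : f c = 0) (hnonneg : ∀ t ∈ Ioo a c, 0 ≤ f t) : m ≤ 0 := by
  refine le_of_tendsto (hf.tendsto_slope.mono_left (nhdsLT_le_nhdsNE c)) ?_
  filter_upwards [Ioo_mem_nhdsLT hac] with t ht
  rw [slope_def_field, hfc, sub_zero]
  exact div_nonpos_of_nonneg_of_nonpos (hnonneg t ht) (sub_nonpos.2 ht.2.le)

theorem ae_eq_zero_of_integral_mul_nonpos (hac : a ≤ c)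
    (hq : ∀ᵐ s ∂volume.restrict (Ioc a c), 0 ≤ q s) (hf : ∀ s ∈ Ioo a c, 0 < f s)
    (hint : IntervalIntegrable (fun s => q s * f s) volume a c)
    (hle : ∫ s in a..c, q s * f s ≤ 0) : ∀ᵐ s ∂volume.restrict (Ioc a c), q s = 0 := by
  have hIoo : ∀ᵐ s ∂volume.restrict (Ioc a c), s ∈ Ioo a c :=
    Measure.restrict_congr_set (μ := volume) (Ioo_ae_eq_Ioc (a := a) (b := c)) ▸
      ae_restrict_mem measurableSet_Ioo
  have hnonneg : 0 ≤ᵐ[volume.restrict (Ioc a c)] fun s => q s * f s := by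
    filter_upwards [hq, hIoo] with s hqs hs using mul_nonneg hqs (hf s hs).le
  have hge : 0 ≤ ∫ s in a..c, q s * f s := by
    rw [intervalIntegral.integral_of_le hac]
    exact integral_nonneg_of_ae hnonneg
  have hzero := (intervalIntegral.integral_eq_zero_iff_of_le_of_nonneg_ae hac hnonneg hint).1
    (hle.antisymm hge)
  filter_upwards [hzero, hIoo] with s hqs hs
  exact (mul_eq_zero.1 hqs).resolve_right (hf s hs).ne'

theorem exists_eq_zero_of_integral_mul_mul_eq (hac : a < c)
    (hq : ∀ᵐ s ∂volume.restrict (Ioc a c), 0 ≤ q s)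
    (hq_ne : ¬ ∀ᵐ s ∂volume.restrict (Ioc a c), q s = 0) (hh : ∀ s ∈ Ioo a c, 0 < h s)
    (hv : ContinuousOn v (Icc a c)) (hL : L ≤ 0)
    (hint : IntervalIntegrable (fun s => q s * h s * v s) volume a c)
    (heq : ∫ s in a..c, q s * h s * v s = L * v c) : ∃ t ∈ Ioo a c, v t = 0 := by
  by_contra! hne
  obtain ⟨m, hm⟩ := nonempty_Ioo.2 hac
  have hsign := mul_pos_of_isPreconnected_of_ne_zero isPreconnected_Ioo
    (hv.mono Ioo_subset_Icc_self) hne m hm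
  have hsign_right : 0 ≤ v m * v c := by
    have hcont : ContinuousOn (fun t => v m * v t) (closure (Ioo a c)) :=
      closure_Ioo hac.ne ▸ continuousOn_const.mul hv
    exact le_on_closure (fun t ht => (hsign t ht).le) continuousOn_const hcont
      (closure_Ioo hac.ne ▸ right_mem_Icc.2 hac.le)
  have hrw : ∀ s, q s * (v m * (h s * v s)) = v m * (q s * h s * v s) := fun s => by ring
  refine hq_ne (ae_eq_zero_of_integral_mul_nonpos (f := fun s => v m * (h s * v s)) hac.le hq
    (fun s hs => ?_) ?_ ?_)
  · rw [mul_left_comm]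
    exact mul_pos (hh s hs) (hsign s hs)
  · simpa only [hrw] using hint.const_mul (v m)
  · simp only [hrw]
    rw [intervalIntegral.integral_const_mul, heq, mul_left_comm]
    exact mul_nonpos_of_nonpos_of_nonneg hL hsign_right

end Sign

namespace IsShootingFamily

variable {a b α : ℝ} {F U U' : ℝ → ℝ → ℝ}

theorem hasDerivAt_left (hU : IsShootingFamily a b F U U') (hab : a ≤ b) (hα : 0 ≤ α) :
    HasDerivAt (U α) α a := by
  have hd := (hU.isCaraSol α hα).1 a (left_mem_Icc.2 hab)
  rwa [hU.deriv_left α hα] at hd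

theorem isLeast_firstZero (hU : IsShootingFamily a b F U U') (hα : α ∈ domB a b U) :
    IsLeast {t | t ∈ Ioc a b ∧ U α t = 0} (firstZero a b U α) := by
  obtain ⟨hα_pos, z, hz, hUz⟩ := hα
  -- There are no zeros just to the right of `a`, so the set of zeros in `(a, b]` is compact.
  have hne : ∀ᶠ t in 𝓝[>] a, U α t ≠ 0 :=
    ((hU.hasDerivAt_left (hz.1.le.trans hz.2) hα_pos.le).eventually_ne hα_pos.ne').filter_mono
      (nhdsGT_le_nhdsNE a)
  obtain ⟨c, hac, hc⟩ := mem_nhdsGT_iff_exists_Ioo_subset.1 hne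
  have hzeros : {t | t ∈ Ioc a b ∧ U α t = 0} = Icc c b ∩ U α ⁻¹' {0} := by
    ext t
    exact ⟨fun ht => ⟨⟨not_lt.1 fun htc => hc ⟨ht.1.1, htc⟩ ht.2, ht.1.2⟩, ht.2⟩,
      fun ht => ⟨⟨hac.trans_le ht.1.1, ht.1.2⟩, ht.2⟩⟩
  have hU_cont : ContinuousOn (U α) (Icc c b) :=
    (hU.isCaraSol α hα_pos.le).continuousOn.mono (Icc_subset_Icc_left hac.le)
  have hcompact : IsCompact (Icc c b ∩ U α ⁻¹' {0}) := isCompact_Icc.of_isClosed_subset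
    (hU_cont.preimage_isClosed_of_isClosed isClosed_Icc isClosed_singleton) inter_subset_left
  rw [firstZero, hzeros]
  exact hcompact.isLeast_sInf (hzeros ▸ ⟨z, hz, hUz⟩)

theorem pos_of_mem_Ioo_firstZero (hU : IsShootingFamily a b F U U') (hα : α ∈ domB a b U) :
    ∀ t ∈ Ioo a (firstZero a b U α), 0 < U α t := by
  intro t ht
  have hα_pos : 0 < α := hα.1
  obtain ⟨⟨hB, -⟩, hmin⟩ := hU.isLeast_firstZero hα
  have hU_cont : ContinuousOn (U α) (Ioo a (firstZero a b U α)) :=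
    (hU.isCaraSol α hα_pos.le).continuousOn.mono
      (Ioo_subset_Icc_self.trans (Icc_subset_Icc_right hB.2))
  have hne : ∀ s ∈ Ioo a (firstZero a b U α), U α s ≠ 0 := fun s hs hUs =>
    hs.2.not_ge (hmin ⟨⟨hs.1, hs.2.le.trans hB.2⟩, hUs⟩)
  have hslope : ∀ᶠ s in 𝓝[>] a, 0 < slope (U α) a s :=
    ((hU.hasDerivAt_left (hB.1.le.trans hB.2) hα_pos.le).tendsto_slope.mono_left
      (nhdsGT_le_nhdsNE a)).eventually (lt_mem_nhds hα_pos)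
  obtain ⟨s, hs_slope, hs⟩ := (hslope.and (Ioo_mem_nhdsGT hB.1)).exists
  have hs_pos : 0 < U α s := pos_of_slope_pos hs.1 hs_slope (hU.apply_left α hα_pos.le)
  exact pos_of_mul_pos_right
    (mul_pos_of_isPreconnected_of_ne_zero isPreconnected_Ioo hU_cont hne s hs t ht) hs_pos.le

end IsShootingFamily

section Nonlinearity

variable {a b : ℝ} {g q u : ℝ → ℝ}

theorem exists_lipschitzOnWith_Iic (hg : ContDiffOn ℝ 1 g (Ici 0)) (hg_ext : ∀ x ≤ 0, g x = 0)
    (M : ℝ) : ∃ K, LipschitzOnWith K g (Iic M) := by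
  obtain ⟨K, hK⟩ := (hg.mono Icc_subset_Ici_self).exists_lipschitzOnWith one_ne_zero
    (convex_Icc 0 (max 0 M)) isCompact_Icc
  have hg_max : g = fun x => g (max 0 x) := by
    ext x
    rcases le_total x 0 with hx | hx
    · rw [max_eq_left hx, hg_ext x hx, hg_ext 0 le_rfl]
    · rw [max_eq_right hx]
  have hmaps : MapsTo (fun x => max 0 x) (Iic M) (Icc 0 (max 0 M)) := fun x hx =>
    ⟨le_max_left 0 x, max_le_max_left 0 hx⟩
  refine ⟨K * 1, ?_⟩
  rw [hg_max]
  exact hK.comp (LipschitzWith.id.const_max 0).lipschitzOnWith hmaps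

theorem exists_lipschitzOnWith_mul (hq : IntervalIntegrable q volume a b)
    (hg : ContDiffOn ℝ 1 g (Ici 0)) (hg_ext : ∀ x ≤ 0, g x = 0) (M : ℝ) :
    ∃ k : ℝ → ℝ≥0, IntervalIntegrable (fun s => (k s : ℝ)) volume a b ∧
      ∀ s, LipschitzOnWith (k s) (fun x => q s * g x) (Iic M) := by
  obtain ⟨K, hK⟩ := exists_lipschitzOnWith_Iic hg hg_ext M
  exact ⟨fun s => ‖q s‖₊ * K, hq.norm.mul_const K, fun s =>
    (lipschitzWith_smul (q s)).comp_lipschitzOnWith hK⟩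

theorem aestronglyMeasurable_mul_deriv_comp (hq : IntervalIntegrable q volume a b)
    (hg : ContDiffOn ℝ 1 g (Ici 0)) (hu : ContinuousOn u (Ioo a b))
    (hpos : ∀ s ∈ Ioo a b, 0 < u s) :
    AEStronglyMeasurable (fun s => q s * deriv g (u s)) (volume.restrict (Ioc a b)) := by
  have hderiv : ContinuousOn (deriv g) (Ioi 0) :=
    (hg.mono Ioi_subset_Ici_self).continuousOn_deriv_of_isOpen isOpen_Ioi le_rfl
  have hcomp := (hderiv.comp hu hpos).aestronglyMeasurable (μ := volume) measurableSet_Ioo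
  rw [Measure.restrict_congr_set Ioo_ae_eq_Ioc] at hcomp
  exact hq.aestronglyMeasurable.mul hcomp

theorem ae_hasDerivAt_mul_comp (hg : ContDiffOn ℝ 1 g (Ici 0)) (hpos : ∀ s ∈ Ioo a b, 0 < u s) :
    ∀ᵐ s ∂volume.restrict (Ioc a b),
      HasDerivAt (fun x => q s * g x) (q s * deriv g (u s)) (u s) := by
  rw [← Measure.restrict_congr_set (Ioo_ae_eq_Ioc (a := a) (b := b))]
  filter_upwards [ae_restrict_mem measurableSet_Ioo] with s hs
  have hdiff : DifferentiableAt ℝ g (u s) :=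
    (hg.differentiableOn one_ne_zero).differentiableAt (Ici_mem_nhds (hpos s hs))
  exact hdiff.hasDerivAt.const_mul (q s)

theorem IsShootingFamily.integral_mul_mul_variation {U U' : ℝ → ℝ → ℝ} {v : ℝ → ℝ} {c α : ℝ}
    (hU : IsShootingFamily a b (fun s x => q s * g x) U U') (hq : IntervalIntegrable q volume a b)
    (hq_nonneg : ∀ᵐ s ∂volume.restrict (Icc a b), 0 ≤ q s) (hg : ContDiffOn ℝ 1 g (Ici 0))
    (hg_nonneg : ∀ x, 0 ≤ g x) (hg_ext : ∀ x ≤ 0, g x = 0) (hα : 0 < α)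
    (hv : ∀ t ∈ Icc a b, HasDerivAt (fun β => U β t) (v t) α) (hc : c ∈ Icc a b)
    (hpos : ∀ s ∈ Ioo a c, 0 < U α s) (hUc : U α c = 0) :
    ContinuousOn v (Icc a c) ∧
      IntervalIntegrable (fun s => q s * (U α s * deriv g (U α s) - g (U α s)) * v s) volume a c ∧
      ∫ s in a..c, q s * (U α s * deriv g (U α s) - g (U α s)) * v s = U' α c * v c := by
  have hF : ∀ᵐ s ∂volume.restrict (Icc a b), ∀ x, 0 ≤ q s * g x :=
    hq_nonneg.mono fun s hs x => mul_nonneg hs (hg_nonneg x)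
  obtain ⟨k, hk, hF_lip⟩ := exists_lipschitzOnWith_mul hq hg hg_ext ((α + 1) * (b - a))
  have hα' : α ∈ Ioo 0 (α + 1) := ⟨hα, lt_add_one α⟩
  have hsub : Icc a c ⊆ Icc a b := Icc_subset_Icc_right hc.2
  have hu_cont : ContinuousOn (U α) (Ioo a c) :=
    (hU.isCaraSol α hα.le).continuousOn.mono (Ioo_subset_Icc_self.trans hsub)
  have hfactor : ∀ s, q s * (U α s * deriv g (U α s) - g (U α s)) * v s =
      (U α s * (q s * deriv g (U α s)) - q s * g (U α s)) * v s := fun s => by ring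
  simp only [hfactor]
  exact ⟨(hU.continuousOn_variation hF hk (ae_of_all _ hF_lip) hα' hv).mono hsub,
    hU.integral_sub_mul_variation hF hk (ae_of_all _ hF_lip) hα' hv hc hUc
      (ae_hasDerivAt_mul_comp hg hpos) (aestronglyMeasurable_mul_deriv_comp
        (hq.mono_set (uIcc_subset_uIcc left_mem_uIcc (Icc_subset_uIcc hc))) hg hu_cont hpos)⟩

end Nonlinearity

/-- Under `(g₊)` and `(g_s)`, for every `α ∈ dom B` the function
`t ↦ ∂_α u(t;α)` has at least one zero in the open interval `(a, B(α))`. -/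
theorem deriv_in_alpha_has_zero
    (a b : ℝ) (hab : a < b)
    (q : ℝ → ℝ)
    (hq_int : IntegrableOn q (Set.Icc a b))
    (hq_nonneg : ∀ᵐ t ∂(volume.restrict (Set.Icc a b)), 0 ≤ q t)
    (hq_ne : ¬ (∀ᵐ t ∂(volume.restrict (Set.Icc a b)), q t = 0))
    (g : ℝ → ℝ)
    (hg_C1 : ContDiffOn ℝ 1 g (Set.Ici 0))
    (hg0 : g 0 = 0)
    (hg_pos : ∀ s > 0, 0 < g s)
    (hg_ext : ∀ s ≤ (0 : ℝ), g s = 0)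
    -- condition (g_s): `g'(s) > g(s)/s` for all `s > 0`:
    (hg_s : ∀ s > (0 : ℝ), g s / s < deriv g s)
    -- the shooting family `U α = u(·;α)`, with time-derivative `U' α` and
    -- derivative `DU α t = ∂_α u(t;α)` with respect to the initial slope:
    (U U' DU : ℝ → ℝ → ℝ)
    (hU_sol : ∀ α ≥ (0 : ℝ), IsCaraSol a b (fun s x => q s * g x) (U α) (U' α))
    (hU_init : ∀ α ≥ (0 : ℝ), U α a = 0 ∧ U' α a = α)
    (hU_uniq : ∀ α ≥ (0 : ℝ), ∀ v v' : ℝ → ℝ,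
        IsCaraSol a b (fun s x => q s * g x) v v' → v a = 0 → v' a = α →
        ∀ t ∈ Set.Icc a b, v t = U α t)
    (hDU : ∀ α > (0 : ℝ), ∀ t ∈ Set.Icc a b, HasDerivAt (fun β => U β t) (DU α t) α) :
    ∀ α ∈ domB a b U, ∃ t ∈ Set.Ioo a (firstZero a b U α), DU α t = 0 := by
  intro α hα
  have hU : IsShootingFamily a b (fun s x => q s * g x) U U' :=
    ⟨hU_sol, fun β hβ => (hU_init β hβ).1, fun β hβ => (hU_init β hβ).2⟩
  have hα_pos : 0 < α := hα.1
  obtain ⟨⟨hB, hUB⟩, -⟩ := hU.isLeast_firstZero hα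
  have hpos := hU.pos_of_mem_Ioo_firstZero hα
  set B := firstZero a b U α
  have hBab : B ∈ Icc a b := Ioc_subset_Icc_self hB
  have hu := (hU_sol α hα_pos.le).mono_right hBab
  have hU'_nonpos : U' α B ≤ 0 := hasDerivAt_nonpos_of_nonneg_left hB.1
    (hu.1 B (right_mem_Icc.2 hB.1.le)) hUB fun t ht => (hpos t ht).le
  have hq_ne_zero : ¬ ∀ᵐ s ∂volume.restrict (Ioc a B), q s = 0 := fun hq_zero =>
    hu.not_ae_eq_zero_of_eq hB.1 ((hU.apply_left α hα_pos.le).trans hUB.symm)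
      (by rw [hU.deriv_left α hα_pos.le]; exact hα_pos.ne')
      (hq_zero.mono fun s hs => by rw [hs, zero_mul])
  have hh_pos : ∀ s ∈ Ioo a B, 0 < U α s * deriv g (U α s) - g (U α s) := fun s hs =>
    sub_pos.2 ((div_lt_iff₀' (hpos s hs)).1 (hg_s _ (hpos s hs)))
  have hg_nonneg : ∀ x, 0 ≤ g x := fun x =>
    (le_or_gt x 0).elim (fun hx => (hg_ext x hx).ge) fun hx => (hg_pos x hx).le
  obtain ⟨hv_cont, hint, hlagrange⟩ := hU.integral_mul_mul_variation
    ((intervalIntegrable_iff_integrableOn_Icc_of_le hab.le).2 hq_int) hq_nonneg hg_C1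
    hg_nonneg hg_ext hα_pos (hDU α hα_pos) hBab hpos hUB
  exact exists_eq_zero_of_integral_mul_mul_eq hB.1
    (ae_restrict_of_ae_restrict_of_subset (Ioc_subset_Icc_self.trans (Icc_subset_Icc_right hB.2))
      hq_nonneg) hq_ne_zero hh_pos hv_cont hU'_nonpos hint hlagrange
end
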